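/- arXiv:math/0105128 — 3 statements merged into one kernel-verified Lean document; each statement's English description precedes it below -/
import Mathlib

section
/- Let k ∈ {3,4,6} and θ = 2π/k. On ℝ⁶ with coordinates (q₁,q₂,q₃,p₁,p₂,p₃) define H = ½((cos(θq₃)p₁ − sin(θq₃)p₂)² + p₃²), I₂ = p₁² + p₂², and I₃ = Re((p₁ + i·p₂)^k). Then: (i) {H,I₂} = 0, {H,I₃} = 0 and {I₂,I₃} = 0 identically; (ii) dH, dI₂, dI₃ are linearly independent on a dense open subset of ℝ⁶; (iii) with T(q₁,q₂,q₃,p₁,p₂,p₃) = (q₁,q₂,q₃+1, cosθ·p₁ + sinθ·p₂, −sinθ·p₁ + cosθ·p₂, p₃) one has H ∘ T = H, I₂ ∘ T = I₂ and I₃ ∘ T = I₃. All three functions are real-analytic. -/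
/-!
STATEMENT 6: For k ∈ {3,4,6}, θ = 2π/k, on ℝ⁶ with coordinates (q₁,q₂,q₃,p₁,p₂,p₃):
H = ½((cos(θq₃)p₁ − sin(θq₃)p₂)² + p₃²), I₂ = p₁² + p₂², I₃ = Re((p₁ + i·p₂)^k)
Poisson-commute pairwise, have linearly independent differentials on a dense open
subset, are invariant under T = (q₁,q₂,q₃+1, cosθ·p₁+sinθ·p₂, −sinθ·p₁+cosθ·p₂, p₃),
and are real-analytic on all of ℝ⁶.
Coordinates: qᵢ = x i for i = 0,1,2 and pᵢ = x (i+3) for i = 0,1,2.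
-/

/-- Partial derivative of a function on ℝ⁶ in the `i`-th coordinate direction. -/
noncomputable def pderiv6 (i : Fin 6) (F : (Fin 6 → ℝ) → ℝ) (x : Fin 6 → ℝ) : ℝ :=
  fderiv ℝ F x (Pi.single i 1)

/-- The canonical Poisson bracket on ℝ⁶ = T*ℝ³:
`{F,G} = Σᵢ (∂F/∂qᵢ · ∂G/∂pᵢ − ∂F/∂pᵢ · ∂G/∂qᵢ)`. -/
noncomputable def poisson6 (F G : (Fin 6 → ℝ) → ℝ) (x : Fin 6 → ℝ) : ℝ :=
  ∑ i : Fin 3,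
    (pderiv6 ⟨i.1, by have := i.isLt; omega⟩ F x *
       pderiv6 ⟨i.1 + 3, by have := i.isLt; omega⟩ G x -
     pderiv6 ⟨i.1 + 3, by have := i.isLt; omega⟩ F x *
       pderiv6 ⟨i.1, by have := i.isLt; omega⟩ G x)

/-!
In terms of `z = p₁ + i p₂`, the functions are `H = ½ (Re (e^{iθq₃} z)² + p₃²)`, `I₂ = |z|²` and
`I₃ = Re (z ^ k)`, while `T` acts by `z ↦ e^{-iθ} z`, `q₃ ↦ q₃ + 1`; invariance is then immediate,
as `e^{-iθ}` is a `k`-th root of unity. A function of `z` alone commutes with every function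
invariant under translations in `q₁` and `q₂`, because the remaining term of the bracket pairs
`∂/∂q₃` with `∂/∂p₃`, and `z` depends on neither coordinate. The differentials are independent
where `p₃ Im (z ^ k) ≠ 0`, the complement of the zero set of a nonzero analytic function.
-/

open Complex
open scoped ContDiff

theorem fderiv_apply_eq_zero_of_forall_add_smul {𝕜 E F : Type*} [NontriviallyNormedField 𝕜]
    [NormedAddCommGroup E] [NormedSpace 𝕜 E] [NormedAddCommGroup F] [NormedSpace 𝕜 F]
    {f : E → F} {x v : E} (h : ∀ t : 𝕜, f (x + t • v) = f x) : fderiv 𝕜 f x v = 0 := by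
  by_cases hf : DifferentiableAt 𝕜 f x
  · rw [← hf.lineDeriv_eq_fderiv, lineDeriv, funext h, deriv_const]
  · rw [fderiv_zero_of_not_differentiableAt hf, zero_apply]

theorem dense_ne_zero_of_analyticOnNhd {𝕜 E F : Type*} [NontriviallyNormedField 𝕜]
    [NormedAddCommGroup E] [NormedSpace 𝕜 E] [PreconnectedSpace E] [NormedAddCommGroup F]
    [NormedSpace 𝕜 F] {f : E → F} (hf : AnalyticOnNhd 𝕜 f Set.univ) {a : E} (ha : f a ≠ 0) :
    Dense {x | f x ≠ 0} := by
  refine interior_eq_empty_iff_dense_compl.mp (Set.eq_empty_iff_forall_notMem.mpr fun x hx => ha ?_)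
  exact hf.eqOn_zero_of_preconnected_of_eventuallyEq_zero isPreconnected_univ
    (Set.mem_univ x) (mem_interior_iff_mem_nhds.mp hx) (Set.mem_univ a)

theorem exp_two_pi_div_mul_I_pow {k : ℕ} (hk : k ≠ 0) :
    exp ((2 * Real.pi / k : ℝ) * I) ^ k = 1 := by
  rw [← (isPrimitiveRoot_exp k hk).pow_eq_one]
  push_cast
  ring_nf

/-- The Hamiltonian `H` of the sub-Riemannian geodesic flow, lifted to the universal cover. -/
noncomputable def suspensionHamiltonian (θ : ℝ) (x : Fin 6 → ℝ) : ℝ :=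
  (1 / 2) * ((Real.cos (θ * x 2) * x 3 - Real.sin (θ * x 2) * x 4) ^ 2 + x 5 ^ 2)

/-- The first integral `I₂ = p₁² + p₂²`. -/
def momentumSq (x : Fin 6 → ℝ) : ℝ :=
  x 3 ^ 2 + x 4 ^ 2

/-- The first integral `I₃ = Re ((p₁ + i p₂) ^ k)`. -/
noncomputable def rePowMomentum (k : ℕ) (x : Fin 6 → ℝ) : ℝ :=
  (((x 3 : ℂ) + I * (x 4 : ℂ)) ^ k).re

/-- The deck transformation `T`: the quotient by `T` closes up the suspension in the
`q₃`-direction. -/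
noncomputable def suspensionDeck (θ : ℝ) (x : Fin 6 → ℝ) : Fin 6 → ℝ :=
  ![x 0, x 1, x 2 + 1, Real.cos θ * x 3 + Real.sin θ * x 4,
    -Real.sin θ * x 3 + Real.cos θ * x 4, x 5]

/-- The complex momentum `z = p₁ + i p₂`. -/
noncomputable def complexMomentum : (Fin 6 → ℝ) →L[ℝ] ℂ :=
  ofRealCLM.comp (.proj 3) + I • ofRealCLM.comp (.proj 4)

/-- The vector of `ℝ⁶` with complex momentum `w` and all other coordinates zero. -/
def momentumLift (w : ℂ) : Fin 6 → ℝ :=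
  ![0, 0, 0, w.re, w.im, 0]

theorem complexMomentum_apply (x : Fin 6 → ℝ) : complexMomentum x = x 3 + I * x 4 := rfl

theorem complexMomentum_momentumLift (w : ℂ) : complexMomentum (momentumLift w) = w := by
  apply Complex.ext <;> simp [complexMomentum_apply, momentumLift]

theorem complexMomentum_single {i : Fin 6} (h₃ : i ≠ 3) (h₄ : i ≠ 4) :
    complexMomentum (Pi.single i 1) = 0 := by
  simp [complexMomentum_apply, h₃.symm, h₄.symm]

theorem suspensionHamiltonian_eq (θ : ℝ) (x : Fin 6 → ℝ) :
    suspensionHamiltonian θ x =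
      (1 / 2) * ((exp ((θ * x 2 : ℝ) * I) * complexMomentum x).re ^ 2 + x 5 ^ 2) := by
  rw [mul_re, exp_ofReal_mul_I_re, exp_ofReal_mul_I_im]
  simp [suspensionHamiltonian, complexMomentum_apply]

theorem momentumSq_eq (x : Fin 6 → ℝ) : momentumSq x = ‖complexMomentum x‖ ^ 2 := by
  rw [Complex.sq_norm, normSq_apply]
  simp [momentumSq, complexMomentum_apply, sq]

theorem rePowMomentum_eq (k : ℕ) (x : Fin 6 → ℝ) :
    rePowMomentum k x = (complexMomentum x ^ k).re := rfl

theorem complexMomentum_suspensionDeck (θ : ℝ) (x : Fin 6 → ℝ) :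
    complexMomentum (suspensionDeck θ x) = exp (-(θ * I)) * complexMomentum x := by
  rw [← neg_mul, ← ofReal_neg, exp_mul_I, ← ofReal_cos, ← ofReal_sin]
  apply Complex.ext <;> simp [complexMomentum_apply, suspensionDeck, add_comm]

theorem suspensionHamiltonian_comp_suspensionDeck (θ : ℝ) :
    suspensionHamiltonian θ ∘ suspensionDeck θ = suspensionHamiltonian θ := by
  funext x
  have hexp : exp ((θ * (x 2 + 1) : ℝ) * I) * exp (-(θ * I)) = exp ((θ * x 2 : ℝ) * I) := by
    rw [← Complex.exp_add]
    push_cast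
    ring_nf
  have h₂ : suspensionDeck θ x 2 = x 2 + 1 := rfl
  have h₅ : suspensionDeck θ x 5 = x 5 := rfl
  rw [Function.comp_apply, suspensionHamiltonian_eq, suspensionHamiltonian_eq,
    complexMomentum_suspensionDeck, ← mul_assoc, h₂, h₅, hexp]

theorem momentumSq_comp_suspensionDeck (θ : ℝ) :
    momentumSq ∘ suspensionDeck θ = momentumSq := by
  funext x
  rw [Function.comp_apply, momentumSq_eq, momentumSq_eq, complexMomentum_suspensionDeck, norm_mul,
    ← neg_mul, ← ofReal_neg, norm_exp_ofReal_mul_I, one_mul]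

theorem rePowMomentum_comp_suspensionDeck {θ : ℝ} {k : ℕ} (hθ : exp (θ * I) ^ k = 1) :
    rePowMomentum k ∘ suspensionDeck θ = rePowMomentum k := by
  funext x
  rw [Function.comp_apply, rePowMomentum_eq, rePowMomentum_eq, complexMomentum_suspensionDeck,
    Complex.exp_neg, mul_pow, inv_pow, hθ, inv_one, one_mul]

theorem contDiff_suspensionHamiltonian (θ : ℝ) : ContDiff ℝ ω (suspensionHamiltonian θ) := by
  unfold suspensionHamiltonian
  fun_prop

theorem contDiff_momentumSq : ContDiff ℝ ω momentumSq := by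
  unfold momentumSq
  fun_prop

theorem contDiff_complexMomentum_pow (k : ℕ) : ContDiff ℝ ω fun x => complexMomentum x ^ k :=
  complexMomentum.contDiff.pow k

theorem contDiff_rePowMomentum (k : ℕ) : ContDiff ℝ ω (rePowMomentum k) :=
  reCLM.contDiff.comp (contDiff_complexMomentum_pow k)

theorem poisson6_comp_complexMomentum {F : (Fin 6 → ℝ) → ℝ} {x : Fin 6 → ℝ}
    (hF₀ : ∀ t : ℝ, F (x + t • Pi.single 0 1) = F x)
    (hF₁ : ∀ t : ℝ, F (x + t • Pi.single 1 1) = F x) (g : ℂ → ℝ) :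
    poisson6 F (fun y => g (complexMomentum y)) x = 0 := by
  have hF (i : Fin 6) (h : ∀ t : ℝ, F (x + t • Pi.single i 1) = F x) : pderiv6 i F x = 0 :=
    fderiv_apply_eq_zero_of_forall_add_smul h
  have hg (i : Fin 6) (h₃ : i ≠ 3) (h₄ : i ≠ 4) :
      pderiv6 i (fun y => g (complexMomentum y)) x = 0 :=
    fderiv_apply_eq_zero_of_forall_add_smul fun t => by
      rw [map_add, map_smul, complexMomentum_single h₃ h₄, smul_zero, add_zero]
  simp [poisson6, Fin.sum_univ_three, hF 0 hF₀, hF 1 hF₁, hg]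

theorem poisson6_suspensionHamiltonian_comp_complexMomentum (θ : ℝ) (g : ℂ → ℝ)
    (x : Fin 6 → ℝ) :
    poisson6 (suspensionHamiltonian θ) (fun y => g (complexMomentum y)) x = 0 :=
  poisson6_comp_complexMomentum (fun t => by simp [suspensionHamiltonian])
    (fun t => by simp [suspensionHamiltonian]) g

theorem poisson6_suspensionHamiltonian_momentumSq (θ : ℝ) (x : Fin 6 → ℝ) :
    poisson6 (suspensionHamiltonian θ) momentumSq x = 0 := by
  rw [funext momentumSq_eq]
  exact poisson6_suspensionHamiltonian_comp_complexMomentum θ (fun z => ‖z‖ ^ 2) x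

theorem poisson6_suspensionHamiltonian_rePowMomentum (θ : ℝ) (k : ℕ) (x : Fin 6 → ℝ) :
    poisson6 (suspensionHamiltonian θ) (rePowMomentum k) x = 0 :=
  poisson6_suspensionHamiltonian_comp_complexMomentum θ (fun z => (z ^ k).re) x

theorem poisson6_momentumSq_rePowMomentum (k : ℕ) (x : Fin 6 → ℝ) :
    poisson6 momentumSq (rePowMomentum k) x = 0 :=
  poisson6_comp_complexMomentum (fun t => by simp [momentumSq]) (fun t => by simp [momentumSq])
    fun z => (z ^ k).re

theorem fderiv_suspensionHamiltonian_single_five (θ : ℝ) (x : Fin 6 → ℝ) :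
    fderiv ℝ (suspensionHamiltonian θ) x (Pi.single 5 1) = x 5 := by
  have hd : DifferentiableAt ℝ (suspensionHamiltonian θ) x :=
    (contDiff_suspensionHamiltonian θ).differentiable (by simp) x
  have hsq : HasDerivAt (fun t : ℝ => (x 5 + t) ^ 2) (2 * x 5) 0 := by
    simpa using ((hasDerivAt_id (0 : ℝ)).const_add (x 5)).fun_pow 2
  rw [← hd.lineDeriv_eq_fderiv]
  simp [lineDeriv, suspensionHamiltonian, hsq.deriv]

theorem fderiv_momentumSq_apply (x v : Fin 6 → ℝ) :
    fderiv ℝ momentumSq x v = 2 * inner ℝ (complexMomentum x) (complexMomentum v) := by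
  rw [funext momentumSq_eq, (complexMomentum.hasFDerivAt (x := x)).norm_sq.fderiv]
  simp only [smul_apply, ContinuousLinearMap.comp_apply, innerSL_apply_apply, nsmul_eq_mul,
    Nat.cast_ofNat]

theorem fderiv_rePowMomentum_apply (k : ℕ) (x v : Fin 6 → ℝ) :
    fderiv ℝ (rePowMomentum k) x v =
      (k * complexMomentum x ^ (k - 1) * complexMomentum v).re := by
  have h : HasFDerivAt (rePowMomentum k) _ x :=
    reCLM.hasFDerivAt.comp x ((complexMomentum.hasFDerivAt (x := x)).pow k)
  rw [h.fderiv]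
  simp [mul_assoc]

/-- Evaluated on `∂/∂p₃` and on the rotational and radial directions `i z`, `z` of the
`(p₁, p₂)`-plane, the differentials of `H`, `I₃`, `I₂` form a triangular matrix with diagonal
`p₃`, `-k Im (z ^ k)`, `2 |z|²`. -/
theorem linearIndependent_fderiv {k : ℕ} (hk : k ≠ 0) (θ : ℝ) {x : Fin 6 → ℝ}
    (hx₅ : x 5 ≠ 0) (him : (complexMomentum x ^ k).im ≠ 0) :
    LinearIndependent ℝ ![fderiv ℝ (suspensionHamiltonian θ) x, fderiv ℝ momentumSq x,
      fderiv ℝ (rePowMomentum k) x] := by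
  set z := complexMomentum x
  have hz₀ : z ≠ 0 := by
    intro h
    simp [h, hk] at him
  rw [Fintype.linearIndependent_iff]
  intro g hg
  have eval (v : Fin 6 → ℝ) : g 0 * fderiv ℝ (suspensionHamiltonian θ) x v +
      g 1 * (2 * inner ℝ z (complexMomentum v)) +
      g 2 * (k * z ^ (k - 1) * complexMomentum v).re = 0 := by
    simpa [Fin.sum_univ_three, fderiv_momentumSq_apply, fderiv_rePowMomentum_apply] using
      DFunLike.congr_fun hg v
  have hg₀ : g 0 = 0 := by
    simpa [fderiv_suspensionHamiltonian_single_five, complexMomentum_single, hx₅] using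
      eval (Pi.single 5 1)
  have hg₂ : g 2 = 0 := by
    have hrot : k * z ^ (k - 1) * (I * z) = I * (k * z ^ k) := by
      rw [← pow_sub_one_mul hk z]; ring
    have horth : inner ℝ z (I * z) = 0 := by
      simp [Complex.inner]; ring
    have h := eval (momentumLift (I * z))
    rw [complexMomentum_momentumLift, hrot, horth, hg₀] at h
    simpa [hk, him] using h
  have hg₁ : g 1 = 0 := by
    simpa [hg₀, hg₂, complexMomentum_momentumLift, hz₀] using eval (momentumLift z)
  intro i
  fin_cases i <;> assumption

theorem exists_isOpen_dense_linearIndependent_fderiv {k : ℕ} (hk : k ≠ 0) (θ : ℝ) :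
    ∃ U : Set (Fin 6 → ℝ), IsOpen U ∧ Dense U ∧ ∀ x ∈ U, LinearIndependent ℝ
      ![fderiv ℝ (suspensionHamiltonian θ) x, fderiv ℝ momentumSq x,
        fderiv ℝ (rePowMomentum k) x] := by
  let f (x : Fin 6 → ℝ) : ℝ := x 5 * (complexMomentum x ^ k).im
  have hf : ContDiff ℝ ω f :=
    (contDiff_apply ℝ ℝ 5).mul (imCLM.contDiff.comp (contDiff_complexMomentum_pow k))
  obtain ⟨w, hw⟩ : ∃ w : ℂ, w ^ k = I := IsAlgClosed.exists_pow_nat_eq I hk.pos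
  obtain ⟨a, ha₅, haw⟩ : ∃ a : Fin 6 → ℝ, a 5 = 1 ∧ complexMomentum a = w :=
    ⟨![0, 0, 0, w.re, w.im, 1], rfl, by apply Complex.ext <;> simp [complexMomentum_apply]⟩
  have ha : f a ≠ 0 := by simp [f, ha₅, haw, hw]
  refine ⟨{x | f x ≠ 0}, isOpen_ne_fun hf.continuous continuous_const,
    dense_ne_zero_of_analyticOnNhd hf.analyticOnNhd ha, fun x hx => ?_⟩
  obtain ⟨hx₅, him⟩ := mul_ne_zero_iff.mp hx
  exact linearIndependent_fderiv hk θ hx₅ him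

theorem analytic_integrability_elliptic_case_general {k : ℕ} (hk : k ≠ 0) {θ : ℝ}
    (hθ : exp (θ * I) ^ k = 1) :
    (∀ x, poisson6 (suspensionHamiltonian θ) momentumSq x = 0) ∧
    (∀ x, poisson6 (suspensionHamiltonian θ) (rePowMomentum k) x = 0) ∧
    (∀ x, poisson6 momentumSq (rePowMomentum k) x = 0) ∧
    (∃ U : Set (Fin 6 → ℝ), IsOpen U ∧ Dense U ∧ ∀ x ∈ U, LinearIndependent ℝ
      ![fderiv ℝ (suspensionHamiltonian θ) x, fderiv ℝ momentumSq x,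
        fderiv ℝ (rePowMomentum k) x]) ∧
    (suspensionHamiltonian θ ∘ suspensionDeck θ = suspensionHamiltonian θ ∧
      momentumSq ∘ suspensionDeck θ = momentumSq ∧
      rePowMomentum k ∘ suspensionDeck θ = rePowMomentum k) ∧
    (AnalyticOnNhd ℝ (suspensionHamiltonian θ) Set.univ ∧
      AnalyticOnNhd ℝ momentumSq Set.univ ∧ AnalyticOnNhd ℝ (rePowMomentum k) Set.univ) :=
  ⟨poisson6_suspensionHamiltonian_momentumSq θ, poisson6_suspensionHamiltonian_rePowMomentum θ k,
    poisson6_momentumSq_rePowMomentum k, exists_isOpen_dense_linearIndependent_fderiv hk θ,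
    ⟨suspensionHamiltonian_comp_suspensionDeck θ, momentumSq_comp_suspensionDeck θ,
      rePowMomentum_comp_suspensionDeck hθ⟩,
    (contDiff_suspensionHamiltonian θ).analyticOnNhd, contDiff_momentumSq.analyticOnNhd,
    (contDiff_rePowMomentum k).analyticOnNhd⟩

theorem analytic_integrability_elliptic_case (k : ℕ) (hk : k ∈ ({3, 4, 6} : Set ℕ))
    (θ : ℝ) (hθ : θ = 2 * Real.pi / k)
    (H I₂ I₃ : (Fin 6 → ℝ) → ℝ) (T : (Fin 6 → ℝ) → (Fin 6 → ℝ))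
    (hH : H = fun x =>
      (1/2) * ((Real.cos (θ * x 2) * x 3 - Real.sin (θ * x 2) * x 4)^2 + (x 5)^2))
    (hI₂ : I₂ = fun x => (x 3)^2 + (x 4)^2)
    (hI₃ : I₃ = fun x => (((x 3 : ℂ) + Complex.I * (x 4 : ℂ)) ^ k).re)
    (hT : T = fun x => ![x 0, x 1, x 2 + 1,
      Real.cos θ * x 3 + Real.sin θ * x 4,
      -Real.sin θ * x 3 + Real.cos θ * x 4, x 5]) :
    (∀ x, poisson6 H I₂ x = 0) ∧ (∀ x, poisson6 H I₃ x = 0) ∧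
    (∀ x, poisson6 I₂ I₃ x = 0) ∧
    (∃ U : Set (Fin 6 → ℝ), IsOpen U ∧ Dense U ∧ ∀ x ∈ U,
      LinearIndependent ℝ ![fderiv ℝ H x, fderiv ℝ I₂ x, fderiv ℝ I₃ x]) ∧
    (H ∘ T = H ∧ I₂ ∘ T = I₂ ∧ I₃ ∘ T = I₃) ∧
    (AnalyticOnNhd ℝ H Set.univ ∧ AnalyticOnNhd ℝ I₂ Set.univ ∧
      AnalyticOnNhd ℝ I₃ Set.univ) := by
  have hk₀ : k ≠ 0 := by rintro rfl; simp at hk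
  subst hθ hH hI₂ hI₃ hT
  exact analytic_integrability_elliptic_case_general hk₀ (exp_two_pi_div_mul_I_pow hk₀)
end

section
/- On ℝ⁶ with coordinates (q₁,q₂,q₃,p₁,p₂,p₃) define H = ½(p₁² + (cos(q₁)p₂ − sin(q₁)p₃)²). Then the canonical Poisson brackets satisfy {H, p₂} = 0, {H, p₃} = 0 and {p₂, p₃} = 0 identically, and the differentials dH, dp₂, dp₃ are linearly independent at every point of a dense open subset of ℝ⁶. Hence H, p₂, p₃ form a complete involutive set of first integrals. -/
/-!
Bracketing with a momentum is differentiation in the conjugate position, `{F, pⱼ} = ∂F/∂qⱼ`, so `F`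
commutes with `pⱼ` as soon as it is constant along the `qⱼ`-axis. The Hamiltonian involves neither
`q₂` nor `q₃`, and the momenta involve no position at all, which gives the three brackets. For
independence, evaluate covectors at `∂/∂p₁`: this kills `dp₂` and `dp₃`, while `dH` takes the value
`∂H/∂p₁ = p₁`. Hence the differentials are independent off the hyperplane `p₁ = 0`.
-/

theorem linearIndependent_vecCons_of_map_ne_zero {K M N : Type*} [DivisionRing K]
    [AddCommGroup M] [Module K M] [AddCommGroup N] [Module K N] {n : ℕ} {m : M} {v : Fin n → M}
    (hv : LinearIndependent K v) (e : M →ₗ[K] N) (hev : ∀ i, e (v i) = 0) (hem : e m ≠ 0) :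
    LinearIndependent K (Matrix.vecCons m v) := by
  have span_le_ker : Submodule.span K (Set.range v) ≤ LinearMap.ker e :=
    Submodule.span_le.2 (Set.range_subset_iff.2 hev)
  exact linearIndependent_finCons.2 ⟨hv, fun hm => hem (span_le_ker hm)⟩

theorem linearIndependent_continuousLinearMap_proj (R ι : Type*) [CommRing R] [TopologicalSpace R]
    [IsTopologicalRing R] :
    LinearIndependent R fun i : ι => (ContinuousLinearMap.proj i : (ι → R) →L[R] R) := by
  classical
  refine .of_pairwise_dual_eq_zero_one _
    (fun i => LinearMap.applyₗ (Pi.single i (1 : R)) ∘ₗ ContinuousLinearMap.coeLM R) ?_ ?_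
  · intro i j hij
    simp [hij]
  · simp

theorem fderiv_apply_eq_zero_of_forall_add_smul_eq {𝕜 E F : Type*} [NontriviallyNormedField 𝕜]
    [NormedAddCommGroup E] [NormedSpace 𝕜 E] [NormedAddCommGroup F] [NormedSpace 𝕜 F]
    {f : E → F} {x v : E} (hf : ∀ t : 𝕜, f (x + t • v) = f x) : fderiv 𝕜 f x v = 0 := by
  by_cases hd : DifferentiableAt 𝕜 f x
  · rw [← hd.lineDeriv_eq_fderiv]
    simp [lineDeriv, hf]
  · simp [fderiv_zero_of_not_differentiableAt hd]

theorem fderiv_coordinate {𝕜 ι : Type*} [NontriviallyNormedField 𝕜] (i : ι) (x : ι → 𝕜) :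
    fderiv 𝕜 (fun y : ι → 𝕜 => y i) x = ContinuousLinearMap.proj i :=
  (ContinuousLinearMap.proj i : (ι → 𝕜) →L[𝕜] 𝕜).fderiv

theorem linearIndependent_vecCons_fderiv_coordinates {𝕜 ι : Type*} [NontriviallyNormedField 𝕜]
    [DecidableEq ι] {F : (ι → 𝕜) → 𝕜} {x : ι → 𝕜} {i : ι} {n : ℕ} {s : Fin n → ι}
    (hs : Function.Injective s) (hi : ∀ k, s k ≠ i) (hF : fderiv 𝕜 F x (Pi.single i 1) ≠ 0) :
    LinearIndependent 𝕜
      (Matrix.vecCons (fderiv 𝕜 F x) ((fun j => fderiv 𝕜 (fun y : ι → 𝕜 => y j) x) ∘ s)) := by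
  simp only [fderiv_coordinate]
  refine linearIndependent_vecCons_of_map_ne_zero
    ((linearIndependent_continuousLinearMap_proj 𝕜 ι).comp s hs)
    (LinearMap.applyₗ (Pi.single i (1 : 𝕜)) ∘ₗ ContinuousLinearMap.coeLM 𝕜) (fun k => ?_) ?_
  · simp [hi k]
  · simpa using hF

theorem pderiv6_coordinate (i j : Fin 6) (x : Fin 6 → ℝ) :
    pderiv6 i (fun y => y j) x = (Pi.single i 1 : Fin 6 → ℝ) j := by
  simp [pderiv6, fderiv_coordinate]

theorem poisson6_momentum (F : (Fin 6 → ℝ) → ℝ) (j : Fin 3) (x : Fin 6 → ℝ) :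
    poisson6 F (fun y => y (j.addNat 3)) x = pderiv6 (j.castAdd 3) F x := by
  simp only [poisson6, pderiv6_coordinate]
  fin_cases j <;> simp [Fin.sum_univ_three, Pi.single_apply]

theorem poisson6_momentum_eq_zero_of_forall_add_single_eq {F : (Fin 6 → ℝ) → ℝ} {x : Fin 6 → ℝ}
    (j : Fin 3) (hF : ∀ t : ℝ, F (x + t • Pi.single (j.castAdd 3) 1) = F x) :
    poisson6 F (fun y => y (j.addNat 3)) x = 0 :=
  (poisson6_momentum F j x).trans (fderiv_apply_eq_zero_of_forall_add_smul_eq hF)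

/-- The Hamiltonian of the sub-Riemannian geodesic flow for the contact distribution
`Ker (sin q₁ dq₂ + cos q₁ dq₃)`: half the sum of the squares of the momenta along the orthonormal
frame `∂/∂q₁`, `cos q₁ ∂/∂q₂ - sin q₁ ∂/∂q₃`. -/
noncomputable def torusHamiltonian (x : Fin 6 → ℝ) : ℝ :=
  (1 / 2) * ((x 3) ^ 2 + (Real.cos (x 0) * x 4 - Real.sin (x 0) * x 5) ^ 2)

theorem differentiable_torusHamiltonian : Differentiable ℝ torusHamiltonian := by
  unfold torusHamiltonian
  fun_prop

theorem pderiv6_three_torusHamiltonian (x : Fin 6 → ℝ) : pderiv6 3 torusHamiltonian x = x 3 := by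
  have along_axis (t : ℝ) : torusHamiltonian (x + t • Pi.single 3 1) =
      1 / 2 * ((x 3 + t) ^ 2 + (Real.cos (x 0) * x 4 - Real.sin (x 0) * x 5) ^ 2) := by
    simp [torusHamiltonian]
  have deriv_sq : deriv (fun t : ℝ => (x 3 + t) ^ 2) 0 = 2 * x 3 := by
    simpa using (((hasDerivAt_id (0 : ℝ)).const_add (x 3)).fun_pow 2).deriv
  rw [pderiv6, ← (differentiable_torusHamiltonian x).lineDeriv_eq_fderiv, lineDeriv]
  simp [along_axis, deriv_sq]

theorem torus_subriemannian_integrable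
    (H P₂ P₃ : (Fin 6 → ℝ) → ℝ)
    (hH : H = fun x =>
      (1/2) * ((x 3)^2 + (Real.cos (x 0) * x 4 - Real.sin (x 0) * x 5)^2))
    (hP₂ : P₂ = fun x => x 4)
    (hP₃ : P₃ = fun x => x 5) :
    (∀ x, poisson6 H P₂ x = 0) ∧ (∀ x, poisson6 H P₃ x = 0) ∧
    (∀ x, poisson6 P₂ P₃ x = 0) ∧
    ∃ U : Set (Fin 6 → ℝ), IsOpen U ∧ Dense U ∧ ∀ x ∈ U,
      LinearIndependent ℝ ![fderiv ℝ H x, fderiv ℝ P₂ x, fderiv ℝ P₃ x] := by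
  obtain rfl : H = torusHamiltonian := hH
  subst hP₂ hP₃
  refine ⟨fun x => ?_, fun x => ?_, fun x => ?_, {x | x 3 ≠ 0},
    isOpen_ne_fun (continuous_apply 3) continuous_const, ?_, fun x hx => ?_⟩
  · exact poisson6_momentum_eq_zero_of_forall_add_single_eq 1 fun t => by simp [torusHamiltonian]
  · exact poisson6_momentum_eq_zero_of_forall_add_single_eq 2 fun t => by simp [torusHamiltonian]
  · exact poisson6_momentum_eq_zero_of_forall_add_single_eq 2 fun t => by simp
  · exact (dense_compl_singleton (0 : ℝ)).preimage (isOpenMap_eval 3)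
  · have pderiv_ne_zero : pderiv6 3 torusHamiltonian x ≠ 0 := by
      rwa [pderiv6_three_torusHamiltonian]
    have differentials_independent :=
      linearIndependent_vecCons_fderiv_coordinates (s := ![4, 5]) (by decide) (by decide)
        pderiv_ne_zero
    -- Unlike `∘`, `FinVec.map` unfolds to an explicit `![_, _]`.
    rwa [← FinVec.map_eq] at differentials_independent
end

section
/- Define vector fields on ℝ³ by ξ₁(x,y,t) = (cos(2πt) − t·sin(2πt), sin(2πt), 0) and ξ₂(x,y,t) = (0,0,1). Then at every point p ∈ ℝ³ the three vectors ξ₁(p), ξ₂(p) and the Lie bracket [ξ₂,ξ₁](p) form a basis of ℝ³ (the relevant 2×2 determinant equals 2π + sin²(2πt) > 0); in particular the plane field spanned by ξ₁ and ξ₂ is a contact (completely non-holonomic) distribution. -/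
/-!
STATEMENT 18 (Jordan-box case): The vector fields on ℝ³
ξ₁(x,y,t) = (cos(2πt) − t·sin(2πt), sin(2πt), 0) and ξ₂(x,y,t) = (0,0,1), together
with their Lie bracket [ξ₂,ξ₁], form a basis of ℝ³ at every point (the relevant
2×2 determinant equals 2π + sin²(2πt) > 0); hence the plane field ⟨ξ₁,ξ₂⟩ is a
contact distribution.
-/

/-- The Lie bracket of two vector fields on `ℝ³ = ℝ × ℝ × ℝ`, defined pointwise by
`[X,Y](p) = DY(p)·X(p) − DX(p)·Y(p)`. -/
noncomputable def lieBracketR3 (X Y : ℝ × ℝ × ℝ → ℝ × ℝ × ℝ) : ℝ × ℝ × ℝ → ℝ × ℝ × ℝ :=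
  fun p => fderiv ℝ Y p (X p) - fderiv ℝ X p (Y p)

/-!
Since `ξ₂ = ∂ₜ` and `ξ₁ = (f(t), g(t), 0)` depends on `t` alone, the bracket `[ξ₂, ξ₁]` is the
velocity `(f'(t), g'(t), 0)` of the curve `ξ₁`. Hence the three fields form a basis
wherever `f g' - g f' ≠ 0`, and for the Jordan box this determinant is `2π + sin² (2πt)`.
-/

theorem lieBracketR3_eq_lieBracket (X Y : ℝ × ℝ × ℝ → ℝ × ℝ × ℝ) :
    lieBracketR3 X Y = VectorField.lieBracket ℝ X Y :=
  rfl

section LieBracket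

variable {𝕜 E : Type*} [NontriviallyNormedField 𝕜] [NormedAddCommGroup E] [NormedSpace 𝕜 E]

theorem lieBracket_const_left (v : E) (W : E → E) (x : E) :
    VectorField.lieBracket 𝕜 (fun _ => v) W x = fderiv 𝕜 W x v := by
  simp [VectorField.lieBracket]

theorem lieBracket_const_comp_clm {γ : 𝕜 → E} {γ' x : E} (τ : E →L[𝕜] 𝕜) (v : E)
    (hγ : HasDerivAt γ γ' (τ x)) :
    VectorField.lieBracket 𝕜 (fun _ => v) (fun y => γ (τ y)) x = τ v • γ' := by
  have hcomp : HasFDerivAt (fun y => γ (τ y)) (.toSpanSingleton 𝕜 γ' ∘L τ) x :=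
    hγ.hasFDerivAt.comp x τ.hasFDerivAt
  rw [lieBracket_const_left, hcomp.fderiv, ContinuousLinearMap.comp_apply,
    ContinuousLinearMap.toSpanSingleton_apply]

end LieBracket

theorem linearIndependent_prod_of_det_ne_zero {R : Type*} [CommRing R] [IsDomain R]
    {v : Fin 3 → R × R × R}
    (hdet : (Matrix.of fun i => ![(v i).1, (v i).2.1, (v i).2.2]).det ≠ 0) :
    LinearIndependent R v := by
  let coords : R × R × R →ₗ[R] Fin 3 → R :=
    LinearMap.pi ![.fst R R (R × R), .fst R R R ∘ₗ .snd R R (R × R),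
      .snd R R R ∘ₗ .snd R R (R × R)]
  refine LinearIndependent.of_comp coords ?_
  convert Matrix.linearIndependent_rows_of_det_ne_zero hdet using 1
  ext i j
  fin_cases j <;> rfl

theorem linearIndependent_lieBracket_of_wronskian_ne_zero {𝕜 : Type*} [NontriviallyNormedField 𝕜]
    {f g : 𝕜 → 𝕜} {f' g' : 𝕜} {p : 𝕜 × 𝕜 × 𝕜}
    (hf : HasDerivAt f f' p.2.2) (hg : HasDerivAt g g' p.2.2)
    (hW : f p.2.2 * g' - g p.2.2 * f' ≠ 0) :
    LinearIndependent 𝕜 ![(f p.2.2, g p.2.2, 0), (0, 0, 1),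
      VectorField.lieBracket 𝕜 (fun _ => (0, 0, 1)) (fun q => (f q.2.2, g q.2.2, 0)) p] := by
  have hbracket : VectorField.lieBracket 𝕜 (fun _ => (0, 0, 1))
      (fun q : 𝕜 × 𝕜 × 𝕜 => (f q.2.2, g q.2.2, (0 : 𝕜))) p = (f', g', 0) := by
    simpa using lieBracket_const_comp_clm
      (.snd 𝕜 𝕜 𝕜 ∘L .snd 𝕜 𝕜 (𝕜 × 𝕜)) (0, 0, 1) (hf.prodMk (hg.prodMk (hasDerivAt_const _ 0)))
  rw [hbracket]
  apply linearIndependent_prod_of_det_ne_zero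
  simpa [Matrix.det_fin_three, neg_add_eq_zero, sub_eq_zero] using hW

section JordanBox

variable (ω t : ℝ)

theorem hasDerivAt_sin_const_mul :
    HasDerivAt (fun s => Real.sin (ω * s)) (ω * Real.cos (ω * t)) t :=
  ((hasDerivAt_const_mul ω).sin).congr_deriv (mul_comm _ _)

theorem hasDerivAt_cos_const_mul_sub_mul_sin :
    HasDerivAt (fun s => Real.cos (ω * s) - s * Real.sin (ω * s))
      (-(ω + 1) * Real.sin (ω * t) - ω * t * Real.cos (ω * t)) t :=
  ((hasDerivAt_const_mul ω).cos.sub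
    ((hasDerivAt_id' t).mul (hasDerivAt_sin_const_mul ω t))).congr_deriv (by ring)

theorem wronskian_cos_sub_mul_sin_sin :
    (Real.cos (ω * t) - t * Real.sin (ω * t)) * (ω * Real.cos (ω * t)) -
      Real.sin (ω * t) * (-(ω + 1) * Real.sin (ω * t) - ω * t * Real.cos (ω * t)) =
      ω + Real.sin (ω * t) ^ 2 := by
  linear_combination ω * Real.sin_sq_add_cos_sq (ω * t)

end JordanBox

theorem contact_distribution_jordan_box_case
    (ξ₁ ξ₂ : ℝ × ℝ × ℝ → ℝ × ℝ × ℝ)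
    (hξ₁ : ξ₁ = fun p =>
      (Real.cos (2 * Real.pi * p.2.2) - p.2.2 * Real.sin (2 * Real.pi * p.2.2),
       Real.sin (2 * Real.pi * p.2.2), 0))
    (hξ₂ : ξ₂ = fun _ => (0, 0, 1)) :
    ∀ p : ℝ × ℝ × ℝ,
      LinearIndependent ℝ ![ξ₁ p, ξ₂ p, lieBracketR3 ξ₂ ξ₁ p] ∧
      Submodule.span ℝ {ξ₁ p, ξ₂ p, lieBracketR3 ξ₂ ξ₁ p} = ⊤ := by
  subst hξ₁ hξ₂
  intro p
  have hW := wronskian_cos_sub_mul_sin_sin (2 * Real.pi) p.2.2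
  have hpos : 0 < 2 * Real.pi + Real.sin (2 * Real.pi * p.2.2) ^ 2 := by positivity
  have hli := linearIndependent_lieBracket_of_wronskian_ne_zero
    (hasDerivAt_cos_const_mul_sub_mul_sin (2 * Real.pi) p.2.2)
    (hasDerivAt_sin_const_mul (2 * Real.pi) p.2.2) (hW.trans_ne hpos.ne')
  rw [lieBracketR3_eq_lieBracket]
  refine ⟨hli, ?_⟩
  simpa only [Matrix.range_cons, Matrix.range_empty, Set.union_empty, Set.singleton_union] using
    hli.span_eq_top_of_card_eq_finrank' (by simp)
end
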